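/- Let k be a field, k((t)) the Laurent series field (HahnSeries ℤ k), and write t = single 1 1, so t⁻¹ = single (−1) 1. Let S be a finite subset of k and set a = Π_{s ∈ S} (t⁻¹ − C s) ∈ k((t)). Then { y ∈ k : res( a · (1 − t·C y)⁻¹ ) = 0 } = S, where res(z) = z.coeff 0 and C : k → k((t)) is the constant embedding. (Thus every finite subset of k arises as a set of the form S_{a,b}.) -/

import Mathlib

/-!
Let `g > 0` and write `t` for the monomial with exponent `g`. Since `(1 - t y)⁻¹ = ∑ yⁿ tⁿ`, the
coefficient at `0` of `t⁻ⁿ (1 - t y)⁻¹` is `yⁿ`. By linearity, multiplying by `(1 - t y)⁻¹` and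
taking the residue evaluates polynomials in `t⁻¹` at `y`: the residue of `p(t⁻¹) (1 - t y)⁻¹` is
`p(y)`. For `p = ∏ (X - s)` it vanishes exactly when `y` is one of the `s`.
-/

section LaurentEvaluation

open Polynomial

variable {Γ R : Type*} [AddCommGroup Γ]

theorem coeff_aeval_single_mul [PartialOrder Γ] [IsOrderedAddMonoid Γ] [CommSemiring R]
    (p : R[X]) (g a : Γ) (r : R) (x : HahnSeries Γ R) :
    (aeval (HahnSeries.single g r) p * x).coeff a =
      p.sum fun n c ↦ c * (r ^ n * x.coeff (a - n • g)) := by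
  simp only [aeval_def, eval₂_eq_sum, Polynomial.sum_def, Finset.sum_mul, HahnSeries.coeff_sum,
    ← Algebra.smul_def, smul_mul_assoc, HahnSeries.coeff_smul, HahnSeries.single_pow,
    HahnSeries.coeff_single_mul, smul_eq_mul]

variable [LinearOrder Γ] [IsOrderedAddMonoid Γ] [CommRing R] {g : Γ}

theorem ringInverse_one_sub_single (hg : 0 < g) (y : R) :
    Ring.inverse (1 - HahnSeries.single g y) =
      (HahnSeries.SummableFamily.powers (HahnSeries.single g y)).hsum := by
  have mul_powers := HahnSeries.SummableFamily.one_sub_self_mul_hsum_powers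
    (HahnSeries.lt_orderTop_single (r := y) hg)
  exact left_inv_eq_right_inv (Ring.inverse_mul_cancel _ (.of_mul_eq_one _ mul_powers)) mul_powers

theorem coeff_nsmul_ringInverse_one_sub_single (hg : 0 < g) (y : R) (n : ℕ) :
    (Ring.inverse (1 - HahnSeries.single g y)).coeff (n • g) = y ^ n := by
  rw [ringInverse_one_sub_single hg, HahnSeries.SummableFamily.coeff_hsum,
    HahnSeries.SummableFamily.coe_powers (HahnSeries.lt_orderTop_single hg)]
  simp only [HahnSeries.single_pow]
  rw [finsum_eq_single _ n fun m hm ↦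
      HahnSeries.coeff_single_of_ne ((nsmul_left_strictMono hg).injective.ne hm.symm),
    HahnSeries.coeff_single_same]

theorem coeff_zero_aeval_single_neg_mul_ringInverse (hg : 0 < g) (p : R[X]) (y : R) :
    (aeval (HahnSeries.single (-g) (1 : R)) p *
      Ring.inverse (1 - HahnSeries.single g y)).coeff 0 = p.eval y := by
  simp only [coeff_aeval_single_mul, one_pow, one_mul, smul_neg, sub_neg_eq_add, zero_add,
    coeff_nsmul_ringInverse_one_sub_single hg, eval_eq_sum]

theorem coeff_zero_prod_single_neg_sub_C_mul_ringInverse {ι : Type*} (hg : 0 < g)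
    (S : Finset ι) (r : ι → R) (y : R) :
    ((∏ i ∈ S, (HahnSeries.single (-g) (1 : R) - HahnSeries.C (r i))) *
      Ring.inverse (1 - HahnSeries.single g y)).coeff 0 = ∏ i ∈ S, (y - r i) := by
  have aeval_prod : aeval (HahnSeries.single (-g) (1 : R)) (∏ i ∈ S, (X - C (r i))) =
      ∏ i ∈ S, (HahnSeries.single (-g) (1 : R) - HahnSeries.C (r i)) := by
    simp only [map_prod, map_sub, aeval_X, aeval_C, HahnSeries.algebraMap_apply,
      Algebra.algebraMap_self_apply]
  rw [← aeval_prod, coeff_zero_aeval_single_neg_mul_ringInverse hg, eval_prod]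
  simp only [eval_sub, eval_X, eval_C]

theorem stmt_12_general [IsDomain R] (hg : 0 < g) (S : Finset R) :
    {y : R | ((∏ s ∈ S, (HahnSeries.single (-g) (1 : R) - HahnSeries.C s)) *
        Ring.inverse (1 - HahnSeries.single g (1 : R) * HahnSeries.C y)).coeff 0 = 0} = ↑S := by
  ext y
  have single_mul_C : HahnSeries.single g (1 : R) * HahnSeries.C y = HahnSeries.single g y := by
    rw [HahnSeries.C_apply, HahnSeries.single_mul_single, add_zero, one_mul]
  rw [Set.mem_ofPred_eq, single_mul_C,
    coeff_zero_prod_single_neg_sub_C_mul_ringInverse hg S (fun s ↦ s), Finset.prod_eq_zero_iff]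
  simp only [sub_eq_zero, exists_eq_right', Finset.mem_coe]

end LaurentEvaluation

/-- in k((t)) = HahnSeries ℤ k with t = single 1 1 and t⁻¹ = single (−1) 1,
    for a finite S ⊆ k and a = Π_{s ∈ S} (t⁻¹ − C s),
    {y ∈ k : res(a/(1 − t·C y)) = 0} = S. -/
theorem stmt_12 {k : Type*} [Field k] (S : Finset k) :
    {y : k | ((∏ s ∈ S, (HahnSeries.single (-1 : ℤ) (1 : k) - HahnSeries.C s)) *
        (1 - HahnSeries.single (1 : ℤ) (1 : k) * HahnSeries.C y)⁻¹).coeff 0 = 0} = ↑S := by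
  simpa only [Ring.inverse_eq_inv] using stmt_12_general (zero_lt_one' ℤ) S
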